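/- Let G be a directed graph on [n] whose reduced canonical form determines a hierarchical poset P_G. Then G admits the MacWilliams Identity — i.e., for all linear codes C_1, C_2 ⊆ F_q^n, if W^G_{C_1}(X) = W^G_{C_2}(X) then W^{Ḡ}_{C_1^⊥}(X) = W^{Ḡ}_{C_2^⊥}(X) — if and only if G satisfies the Unique Decomposition Property. -/

import Mathlib

/-- The closure of a set of vertices `X` in the directed graph with edge relation `E`. -/
def gclosure {n : ℕ} (E : Fin n → Fin n → Prop) (X : Set (Fin n)) : Set (Fin n) :=
  {v | ∃ u ∈ X, Relation.ReflTransGen E u v}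

/-- The `G`-weight of a word `x`. -/
noncomputable def gweight {n : ℕ} {F : Type*} [Field F] (E : Fin n → Fin n → Prop)
    (x : Fin n → F) : ℕ :=
  (gclosure E {i | x i ≠ 0}).ncard

/-- `u` dominates `v`: `v` is reachable from `u` by a directed path. -/
def gdom {n : ℕ} (E : Fin n → Fin n → Prop) : Fin n → Fin n → Prop :=
  Relation.ReflTransGen E

/-- Clique equivalence: `u` and `v` dominate each other. -/
def cliqueSetoid {n : ℕ} (E : Fin n → Fin n → Prop) : Setoid (Fin n) where
  r u v := gdom E u v ∧ gdom E v u
  iseqv := ⟨fun _ => ⟨Relation.ReflTransGen.refl, Relation.ReflTransGen.refl⟩,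
    fun h => ⟨h.2, h.1⟩,
    fun h₁ h₂ => ⟨h₁.1.trans h₂.1, h₂.2.trans h₁.2⟩⟩

/-- The set of classes `V′` of the reduced canonical form of `G`. -/
def Vred {n : ℕ} (E : Fin n → Fin n → Prop) : Type :=
  Quotient (cliqueSetoid E)

/-- The projection `π` from vertices to their classes. -/
def gpi {n : ℕ} (E : Fin n → Fin n → Prop) (v : Fin n) : Vred E :=
  Quotient.mk (cliqueSetoid E) v

/-- The order of the poset `P_G` on the classes: `π(v) ⪯ π(u)` iff `u` dominates `v`. -/
def ple {n : ℕ} (E : Fin n → Fin n → Prop) (a b : Vred E) : Prop :=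
  ∃ u v : Fin n, gpi E v = a ∧ gpi E u = b ∧ gdom E u v

/-- The weight `L(a)` of a class: the number of vertices in it. -/
noncomputable def lwt {n : ℕ} (E : Fin n → Fin n → Prop) (a : Vred E) : ℕ :=
  {v : Fin n | gpi E v = a}.ncard

/-- The height of `a` in `P_G`: the maximum cardinality of a chain of `P_G` having `a`
as its maximal element. -/
noncomputable def hgt {n : ℕ} (E : Fin n → Fin n → Prop) (a : Vred E) : ℕ :=
  sSup {k | ∃ c : Set (Vred E), c.ncard = k ∧ a ∈ c ∧ (∀ x ∈ c, ple E x a) ∧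
    ∀ x ∈ c, ∀ y ∈ c, ple E x y ∨ ple E y x}

/-- `P_G` is hierarchical: every element of height `i > 1` lies strictly above every
element of height `i − 1`. -/
def Hierarchical {n : ℕ} (E : Fin n → Fin n → Prop) : Prop :=
  ∀ a b : Vred E, 1 < hgt E a → hgt E b + 1 = hgt E a → (ple E b a ∧ b ≠ a)

/-- `G` satisfies the Unique Decomposition Property: any two subsets of a level of `P_G`
with the same total `L`-weight are matched by an `L`-preserving bijection. -/
def UDP {n : ℕ} (E : Fin n → Fin n → Prop) : Prop :=
  ∀ (i : ℕ) (S S' : Set (Vred E)),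
    S ⊆ {a | hgt E a = i} → S' ⊆ {a | hgt E a = i} →
    (∑ᶠ a ∈ S, lwt E a) = (∑ᶠ a ∈ S', lwt E a) →
    ∃ g : Vred E → Vred E, Set.BijOn g S S' ∧ ∀ a ∈ S, lwt E (g a) = lwt E a

/-- The number `A_i^G(C)` of elements of `C` of `G`-weight `i`. -/
noncomputable def Acount {n : ℕ} {F : Type*} [Field F] (E : Fin n → Fin n → Prop)
    (C : Set (Fin n → F)) (i : ℕ) : ℕ :=
  {c ∈ C | gweight E c = i}.ncard

/-- The dual code of `C` with respect to the standard dot product. -/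
def dualCode {n : ℕ} {F : Type*} [Field F] (C : Set (Fin n → F)) : Set (Fin n → F) :=
  {y | ∀ c ∈ C, ∑ i, c i * y i = 0}

instance vredFinite {n : ℕ} (E : Fin n → Fin n → Prop) : Finite (Vred E) :=
  inferInstanceAs (Finite (Quotient (cliqueSetoid E)))

theorem gpi_eq {n : ℕ} (E : Fin n → Fin n → Prop) (u v : Fin n) :
    gpi E u = gpi E v ↔ gdom E u v ∧ gdom E v u := by
  unfold gpi
  exact Quotient.eq (r := cliqueSetoid E)

theorem gpi_surj {n : ℕ} (E : Fin n → Fin n → Prop) (a : Vred E) : ∃ v, gpi E v = a :=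
  Quotient.exists_rep (s := cliqueSetoid E) a

theorem ple_gpi {n : ℕ} (E : Fin n → Fin n → Prop) (u v : Fin n) :
    ple E (gpi E v) (gpi E u) ↔ gdom E u v := by
  constructor
  · rintro ⟨u', v', hv, hu, h⟩
    rw [gpi_eq] at hv hu
    exact (hu.2.trans h).trans hv.1
  · intro h
    exact ⟨u, v, rfl, rfl, h⟩

theorem ple_refl {n : ℕ} (E : Fin n → Fin n → Prop) (a : Vred E) : ple E a a := by
  obtain ⟨v, rfl⟩ := gpi_surj E a
  exact (ple_gpi E v v).2 Relation.ReflTransGen.refl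

theorem ple_trans {n : ℕ} (E : Fin n → Fin n → Prop) {a b c : Vred E}
    (h : ple E a b) (h' : ple E b c) : ple E a c := by
  obtain ⟨u, rfl⟩ := gpi_surj E a
  obtain ⟨v, rfl⟩ := gpi_surj E b
  obtain ⟨w, rfl⟩ := gpi_surj E c
  rw [ple_gpi] at *
  exact h'.trans h

theorem ple_antisymm {n : ℕ} (E : Fin n → Fin n → Prop) {a b : Vred E}
    (h : ple E a b) (h' : ple E b a) : a = b := by
  obtain ⟨u, rfl⟩ := gpi_surj E a
  obtain ⟨v, rfl⟩ := gpi_surj E b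
  rw [ple_gpi] at *
  rw [gpi_eq]
  exact ⟨h', h⟩

def IsChainTop {n : ℕ} (E : Fin n → Fin n → Prop) (a : Vred E) (c : Set (Vred E)) : Prop :=
  a ∈ c ∧ (∀ x ∈ c, ple E x a) ∧ ∀ x ∈ c, ∀ y ∈ c, ple E x y ∨ ple E y x

theorem hgt_bdd {n : ℕ} (E : Fin n → Fin n → Prop) (a : Vred E) :
    BddAbove {k | ∃ c : Set (Vred E), c.ncard = k ∧ a ∈ c ∧ (∀ x ∈ c, ple E x a) ∧
    ∀ x ∈ c, ∀ y ∈ c, ple E x y ∨ ple E y x} := by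
  refine ⟨Nat.card (Vred E), ?_⟩
  rintro k ⟨c, rfl, -⟩
  rw [← Set.ncard_univ]
  exact Set.ncard_le_ncard (Set.subset_univ c) (Set.toFinite _)

theorem le_hgt {n : ℕ} (E : Fin n → Fin n → Prop) {a : Vred E} {c : Set (Vred E)}
    (h : IsChainTop E a c) : c.ncard ≤ hgt E a :=
  le_csSup (hgt_bdd E a) ⟨c, rfl, h⟩

theorem exists_hgt {n : ℕ} (E : Fin n → Fin n → Prop) (a : Vred E) :
    ∃ c, IsChainTop E a c ∧ c.ncard = hgt E a := by
  have := Nat.sSup_mem (s := {k | ∃ c : Set (Vred E), c.ncard = k ∧ a ∈ c ∧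
    (∀ x ∈ c, ple E x a) ∧ ∀ x ∈ c, ∀ y ∈ c, ple E x y ∨ ple E y x})
    ⟨_, {a}, rfl, by simp, by simp [ple_refl], by simp [ple_refl]⟩ (hgt_bdd E a)
  obtain ⟨c, h, h'⟩ := this
  exact ⟨c, h', h⟩

theorem hgt_lt {n : ℕ} (E : Fin n → Fin n → Prop) {a b : Vred E}
    (h : ple E a b) (hne : a ≠ b) : hgt E a < hgt E b := by
  obtain ⟨c, hc, hcard⟩ := exists_hgt E a
  have hb : b ∉ c := fun hb => hne (ple_antisymm E h (hc.2.1 b hb))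
  have : IsChainTop E b (insert b c) := by
    refine ⟨by simp, ?_, ?_⟩
    · rintro x (rfl | hx)
      · exact ple_refl E _
      · exact ple_trans E (hc.2.1 x hx) h
    · rintro x (rfl | hx) y (rfl | hy)
      · exact Or.inl (ple_refl E _)
      · exact Or.inr (ple_trans E (hc.2.1 y hy) h)
      · exact Or.inl (ple_trans E (hc.2.1 x hx) h)
      · exact hc.2.2 x hx y hy
  have h2 := le_hgt E this
  rw [Set.ncard_insert_of_notMem hb (Set.toFinite _)] at h2
  omega

theorem hgt_pos {n : ℕ} (E : Fin n → Fin n → Prop) (a : Vred E) : 1 ≤ hgt E a := by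
  have : IsChainTop E a {a} := ⟨by simp, by simp [ple_refl], by simp [ple_refl]⟩
  simpa using le_hgt E this

theorem exists_pred {n : ℕ} (E : Fin n → Fin n → Prop) (a : Vred E) (ha : 1 < hgt E a) :
    ∃ b, hgt E b + 1 = hgt E a := by
  obtain ⟨c, hc, hcard⟩ := exists_hgt E a
  have h1 : (c \ {a}).ncard + 1 = c.ncard :=
    Set.ncard_sdiff_singleton_add_one hc.1 (Set.toFinite _)
  have hne : (c \ {a}).Nonempty := by
    rw [← Set.ncard_pos (Set.toFinite _)]; omega
  obtain ⟨b, hb, hmax⟩ := Set.exists_max_image (c \ {a}) (hgt E) (Set.toFinite _) hne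
  refine ⟨b, ?_⟩
  have hlt : hgt E b < hgt E a := hgt_lt E (hc.2.1 b hb.1) hb.2
  have : IsChainTop E b (c \ {a}) := by
    refine ⟨hb, ?_, fun x hx y hy => hc.2.2 x hx.1 y hy.1⟩
    intro x hx
    rcases hc.2.2 x hx.1 b hb.1 with h | h
    · exact h
    · by_cases hxb : b = x
      · subst hxb; exact h
      · exact absurd (hgt_lt E h hxb) (not_lt.2 (hmax x hx))
  have := le_hgt E this
  omega

theorem ple_of_hgt_lt {n : ℕ} (E : Fin n → Fin n → Prop) (hh : Hierarchical E) (k : ℕ) :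
    ∀ a b : Vred E, hgt E a = hgt E b + 1 + k → ple E b a := by
  induction k with
  | zero =>
    intro a b h
    exact (hh a b (by have := hgt_pos E b; omega) (by omega)).1
  | succ k ih =>
    intro a b h
    have h1 : 1 < hgt E a := by omega
    obtain ⟨c, hc⟩ := exists_pred E a h1
    exact ple_trans E (ih c b (by omega)) (hh a c h1 hc).1

theorem gdom_iff {n : ℕ} (E : Fin n → Fin n → Prop) (hh : Hierarchical E) (u v : Fin n) :
    gdom E u v ↔ (hgt E (gpi E v) < hgt E (gpi E u) ∨ gpi E u = gpi E v) := by
  constructor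
  · intro h
    by_cases h' : gpi E u = gpi E v
    · exact Or.inr h'
    · exact Or.inl (hgt_lt E ((ple_gpi E u v).2 h) (Ne.symm h'))
  · rintro (h | h)
    · rw [← ple_gpi]
      exact ple_of_hgt_lt E hh (hgt E (gpi E u) - hgt E (gpi E v) - 1) _ _ (by omega)
    · exact ((gpi_eq E u v).1 h).1

theorem gdom_flip {n : ℕ} (E : Fin n → Fin n → Prop) (u v : Fin n) :
    Relation.ReflTransGen (flip E) u v ↔ gdom E v u :=
  Relation.reflTransGen_swap

/-- Functions with equinumerous fibres differ by a bijection. -/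
theorem exists_equiv_of_fibers {α α' β : Type*} [Finite α] [Finite α'] (f : α → β) (f' : α' → β)
    (h : ∀ b, Nat.card {a // f a = b} = Nat.card {a // f' a = b}) :
    ∃ e : α ≃ α', ∀ a, f' (e a) = f a := by
  have h2 : ∀ b, Nonempty ({a // f a = b} ≃ {a // f' a = b}) := fun b =>
    Finite.card_eq.1 (h b)
  have g := fun b => (h2 b).some
  refine ⟨(Equiv.sigmaFiberEquiv f).symm.trans
    ((Equiv.sigmaCongrRight g).trans (Equiv.sigmaFiberEquiv f')), ?_⟩
  intro a
  exact (g (f a) ⟨a, rfl⟩).2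

theorem subset_gclosure {n : ℕ} (E : Fin n → Fin n → Prop) (X : Set (Fin n)) :
    X ⊆ gclosure E X := fun x hx => ⟨x, hx, Relation.ReflTransGen.refl⟩

theorem gclosure_sub {n : ℕ} (E : Fin n → Fin n → Prop) {X Y : Set (Fin n)}
    (h : X ⊆ gclosure E Y) : gclosure E X ⊆ gclosure E Y := by
  rintro v ⟨u, hu, huv⟩
  obtain ⟨w, hw, hwu⟩ := h hu
  exact ⟨w, hw, hwu.trans huv⟩

/-- Words related by an isometry of the reverse graph. -/
def IsoRel {n : ℕ} {F : Type*} [Field F] (E : Fin n → Fin n → Prop) (c c' : Fin n → F) : Prop :=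
  ∃ Φ : (Fin n → F) ≃ (Fin n → F), (∀ y, gweight (flip E) (Φ y) = gweight (flip E) y) ∧
    ∀ y, c ⬝ᵥ (Φ y) = c' ⬝ᵥ y

theorem IsoRel.symm {n : ℕ} {F : Type*} [Field F] {E : Fin n → Fin n → Prop} {c c' : Fin n → F}
    (h : IsoRel E c c') : IsoRel E c' c := by
  obtain ⟨Φ, h1, h2⟩ := h
  refine ⟨Φ.symm, fun y => ?_, fun y => ?_⟩
  · rw [← h1, Equiv.apply_symm_apply]
  · rw [← h2, Equiv.apply_symm_apply]

theorem IsoRel.trans {n : ℕ} {F : Type*} [Field F] {E : Fin n → Fin n → Prop} {c c' c'' : Fin n → F}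
    (h : IsoRel E c c') (h' : IsoRel E c' c'') : IsoRel E c c'' := by
  obtain ⟨Φ, h1, h2⟩ := h
  obtain ⟨Ψ, h3, h4⟩ := h'
  refine ⟨Ψ.trans Φ, fun y => ?_, fun y => ?_⟩
  · rw [Equiv.trans_apply, h1, h3]
  · rw [Equiv.trans_apply, h2, h4]

theorem supp_aux {n : ℕ} {F : Type*} [Field F] (E : Fin n → Fin n → Prop) (k m : Fin n)
    (hkm : gdom E k m) (s : F) (y : Fin n → F) :
    {i | (y + Pi.single k (s * y m) : Fin n → F) i ≠ 0} ⊆ gclosure (flip E) {i | y i ≠ 0} := by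
  intro i hi
  by_cases hik : i = k
  · subst hik
    by_cases hm : y m = 0
    · apply subset_gclosure
      simpa [hm] using hi
    · exact ⟨m, hm, (gdom_flip E m i).2 hkm⟩
  · apply subset_gclosure
    simpa [hik] using hi

theorem rel_add {n : ℕ} {F : Type*} [Field F] (E : Fin n → Fin n → Prop) (c : Fin n → F)
    (k m : Fin n) (hk : c k ≠ 0) (hne : m ≠ k) (hkm : gdom E k m) (t : F) :
    IsoRel E c (c + Pi.single m t) := by
  refine ⟨⟨fun y => y + Pi.single k ((t / c k) * y m), fun y => y + Pi.single k ((-(t / c k)) * y m),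
    fun y => ?_, fun y => ?_⟩, fun y => ?_, fun y => ?_⟩
  · ext i; simp [hne, Pi.single_apply]; split_ifs <;> ring
  · ext i; simp [hne, Pi.single_apply]; split_ifs <;> ring
  · show (gclosure _ _).ncard = (gclosure _ _).ncard
    congr 1
    apply Set.Subset.antisymm
    · exact gclosure_sub _ (supp_aux E k m hkm _ y)
    · apply gclosure_sub
      have := supp_aux E k m hkm (-(t / c k)) (y + Pi.single k ((t / c k) * y m))
      convert this using 4
      · simp [hne, Pi.single_apply]
        split_ifs <;> ring
      · exact Iff.rfl
  · simp only [Equiv.coe_fn_mk, dotProduct_add, add_dotProduct, dotProduct_single, single_dotProduct]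
    field_simp

open Classical in
theorem rel_ind {n : ℕ} {F : Type*} [Field F] (E : Fin n → Fin n → Prop) (N : ℕ) :
    ∀ c : Fin n → F, (gclosure E {i | c i ≠ 0} \ {i | c i ≠ 0}).ncard = N →
    IsoRel E c (fun i => if i ∈ gclosure E {i | c i ≠ 0} then 1 else 0) := by
  induction N with
  | zero =>
    intro c hc
    rw [Set.ncard_eq_zero (Set.toFinite _), Set.sdiff_eq_empty] at hc
    have hcl : gclosure E {i | c i ≠ 0} = {i | c i ≠ 0} :=
      Set.Subset.antisymm hc (subset_gclosure _ _)
    rw [hcl]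
    let d : Fin n → F := fun i => if c i = 0 then 1 else (c i)⁻¹
    have hd : ∀ i, d i ≠ 0 := by
      intro i; simp only [d]; split_ifs with h
      · exact one_ne_zero
      · exact inv_ne_zero h
    refine ⟨⟨fun y i => d i * y i, fun y i => (d i)⁻¹ * y i, fun y => ?_, fun y => ?_⟩,
      fun y => ?_, fun y => ?_⟩
    · ext i; field_simp [hd i]
    · ext i; field_simp [hd i]
    · simp [gweight, hd]
    · simp only [Equiv.coe_fn_mk, dotProduct]
      refine Finset.sum_congr rfl fun i _ => ?_
      by_cases h : c i = 0 <;> simp [d, h]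
  | succ N ih =>
    intro c hc
    have hne : (gclosure E {i | c i ≠ 0} \ {i | c i ≠ 0}).Nonempty := by
      rw [← Set.ncard_pos (Set.toFinite _)]; omega
    obtain ⟨m, hm⟩ := hne
    have hm0 : c m = 0 := by simpa using hm.2
    obtain ⟨k, hk, hkm⟩ := hm.1
    have hmk : m ≠ k := by rintro rfl; exact hm.2 hk
    have hsupp : {i | (c + Pi.single m (1 : F) : Fin n → F) i ≠ 0} = insert m {i | c i ≠ 0} := by
      ext i
      by_cases him : i = m
      · subst him; simp [hm0]
      · simp [him]
    have hcl : gclosure E {i | (c + Pi.single m (1 : F) : Fin n → F) i ≠ 0} = gclosure E {i | c i ≠ 0} := by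
      rw [hsupp]
      apply Set.Subset.antisymm
      · apply gclosure_sub
        apply Set.insert_subset hm.1 (subset_gclosure _ _)
      · apply gclosure_sub
        exact (Set.subset_insert _ _).trans (subset_gclosure _ _)
    have h1 := ih (c + Pi.single m (1 : F)) (by
      rw [hcl, hsupp]
      have h2 := Set.ncard_sdiff_singleton_add_one hm (Set.toFinite _)
      have h3 : gclosure E {i | c i ≠ 0} \ insert m {i | c i ≠ 0} =
        (gclosure E {i | c i ≠ 0} \ {i | c i ≠ 0}) \ {m} := by
        ext i; simp; tauto
      rw [h3]; omega)
    rw [hcl] at h1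
    exact (rel_add E c k m hk hmk hkm 1).trans h1

theorem rel_perm {n : ℕ} {F : Type*} [Field F] (E : Fin n → Fin n → Prop)
    (σ : Equiv.Perm (Fin n)) (hσ : ∀ u v, gdom E (σ u) (σ v) ↔ gdom E u v) (c : Fin n → F) :
    IsoRel E c (fun i => c (σ i)) := by
  refine ⟨⟨fun y i => y (σ.symm i), fun y i => y (σ i), fun y => ?_, fun y => ?_⟩,
    fun y => ?_, fun y => ?_⟩
  · ext i; simp
  · ext i; simp
  · have : gclosure (flip E) {i | y (σ.symm i) ≠ 0} = σ '' gclosure (flip E) {i | y i ≠ 0} := by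
      ext v
      simp only [gclosure, Set.mem_ofPred_eq, Set.mem_image, gdom_flip]
      constructor
      · rintro ⟨u, hu, huv⟩
        refine ⟨σ.symm v, ⟨σ.symm u, hu, ?_⟩, by simp⟩
        rw [← hσ]; simpa using huv
      · rintro ⟨w, ⟨u, hu, huv⟩, rfl⟩
        exact ⟨σ u, by simpa using hu, (hσ _ _).2 huv⟩
    simp only [gweight, Equiv.coe_fn_mk]
    rw [this, Set.ncard_image_of_injective _ σ.injective]
  · simp only [Equiv.coe_fn_mk, dotProduct]
    rw [← Equiv.sum_comp σ]
    simp

theorem ncard_fiber {n : ℕ} (E : Fin n → Fin n → Prop) (S : Set (Vred E)) :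
    {v | gpi E v ∈ S}.ncard = ∑ᶠ a ∈ S, lwt E a := by
  classical
  have hS : S.Finite := Set.toFinite S
  induction S, hS using Set.Finite.induction_on with
  | empty => simp
  | @insert a S ha hS ih =>
    rw [finsum_mem_insert _ ha hS, ← ih]
    have : {v | gpi E v ∈ insert a S} = {v | gpi E v = a} ∪ {v | gpi E v ∈ S} := by
      ext v; simp
    rw [this, Set.ncard_union_eq _ (Set.toFinite _) (Set.toFinite _)]
    · rfl
    · rw [Set.disjoint_left]
      intro v hv hv'
      exact ha (hv ▸ hv')

theorem lwt_pos {n : ℕ} (E : Fin n → Fin n → Prop) (a : Vred E) : 0 < lwt E a := by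
  obtain ⟨v, hv⟩ := gpi_surj E a
  exact (Set.ncard_pos (Set.toFinite _)).2 ⟨v, hv⟩

/-- Shape of a nonempty closure. -/
theorem closure_shape {n : ℕ} (E : Fin n → Fin n → Prop) (hh : Hierarchical E)
    (X : Set (Fin n)) (hX : X.Nonempty) :
    ∃ (i : ℕ) (S : Set (Vred E)), S.Nonempty ∧ S ⊆ {a | hgt E a = i} ∧
      gclosure E X = {v | hgt E (gpi E v) < i} ∪ {v | gpi E v ∈ S} := by
  obtain ⟨u, hu, hmax⟩ := Set.exists_max_image X (fun v => hgt E (gpi E v)) (Set.toFinite _) hX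
  refine ⟨hgt E (gpi E u), {a | hgt E a = hgt E (gpi E u) ∧ ∃ v ∈ X, gpi E v = a},
    ⟨gpi E u, rfl, u, hu, rfl⟩, fun a ha => ha.1, ?_⟩
  ext v
  constructor
  · rintro ⟨w, hw, hwv⟩
    have h1 := hmax w hw
    rcases (gdom_iff E hh w v).1 hwv with h | h
    · left; exact lt_of_lt_of_le h h1
    · rcases lt_or_eq_of_le h1 with h2 | h2
      · left
        show hgt E (gpi E v) < _
        rw [← h]; exact h2
      · right
        exact ⟨by rw [← h]; exact h2, w, hw, h⟩
  · rintro (h | ⟨h, w, hw, hwv⟩)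
    · exact ⟨u, hu, (gdom_iff E hh u v).2 (Or.inl h)⟩
    · exact ⟨w, hw, (gdom_iff E hh w v).2 (Or.inr hwv)⟩

theorem shape_ncard {n : ℕ} (E : Fin n → Fin n → Prop) (i : ℕ) (S : Set (Vred E))
    (hS : S ⊆ {a | hgt E a = i}) :
    ({v | hgt E (gpi E v) < i} ∪ {v | gpi E v ∈ S}).ncard =
      {v | hgt E (gpi E v) < i}.ncard + ∑ᶠ a ∈ S, lwt E a := by
  rw [Set.ncard_union_eq _ (Set.toFinite _) (Set.toFinite _), ncard_fiber]
  rw [Set.disjoint_left]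
  intro v hv hv'
  have h1 : hgt E (gpi E v) < i := hv
  have h2 : hgt E (gpi E v) = i := hS hv'
  omega

theorem shape_lt {n : ℕ} (E : Fin n → Fin n → Prop) (i i' : ℕ) (S S' : Set (Vred E))
    (hS : S ⊆ {a | hgt E a = i}) (hS' : S' ⊆ {a | hgt E a = i'}) (hne : S'.Nonempty)
    (h : i < i') :
    ({v | hgt E (gpi E v) < i} ∪ {v | gpi E v ∈ S}).ncard <
      ({v | hgt E (gpi E v) < i'} ∪ {v | gpi E v ∈ S'}).ncard := by
  apply Set.ncard_lt_ncard _ (Set.toFinite _)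
  rw [Set.ssubset_iff_of_subset]
  · obtain ⟨a, ha⟩ := hne
    obtain ⟨v, rfl⟩ := gpi_surj E a
    refine ⟨v, Or.inr ha, ?_⟩
    have h1 : hgt E (gpi E v) = i' := hS' ha
    rintro (h2 | h2)
    · have h2 : hgt E (gpi E v) < i := h2
      omega
    · have h2 : hgt E (gpi E v) = i := hS h2
      omega
  · rintro v (h2 | h2)
    · left; exact lt_trans h2 h
    · left
      have h2 : hgt E (gpi E v) = i := hS h2
      show hgt E (gpi E v) < i'
      omega

theorem exists_perm_classes {n : ℕ} (E : Fin n → Fin n → Prop) (hU : UDP E) (i : ℕ)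
    (S S' : Set (Vred E)) (hS : S ⊆ {a | hgt E a = i}) (hS' : S' ⊆ {a | hgt E a = i})
    (hsum : (∑ᶠ a ∈ S, lwt E a) = ∑ᶠ a ∈ S', lwt E a) :
    ∃ τ : Equiv.Perm (Vred E), (∀ a, hgt E (τ a) = hgt E a) ∧ (∀ a, lwt E (τ a) = lwt E a) ∧
      ∀ a, τ a ∈ S' ↔ a ∈ S := by
  classical
  obtain ⟨g, hg, hgL⟩ := hU i S S' hS hS' hsum
  have hc : (∑ᶠ a ∈ {a | hgt E a = i} \ S, lwt E a) = ∑ᶠ a ∈ {a | hgt E a = i} \ S', lwt E a := by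
    have h1 := finsum_mem_add_sdiff (f := lwt E) hS (Set.toFinite _)
    have h2 := finsum_mem_add_sdiff (f := lwt E) hS' (Set.toFinite _)
    omega
  obtain ⟨g', hg', hgL'⟩ := hU i _ _ Set.sdiff_subset Set.sdiff_subset hc
  let t : Vred E → Vred E := fun a => if a ∈ S then g a else if hgt E a = i then g' a else a
  have t1 : ∀ a ∈ S, t a = g a := fun a ha => by simp [t, ha]
  have t2 : ∀ a, a ∉ S → hgt E a = i → t a = g' a := fun a ha h => by simp [t, ha, h]
  have t3 : ∀ a, hgt E a ≠ i → t a = a := fun a h => by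
    have : a ∉ S := fun ha => h (hS ha)
    simp [t, this, h]
  have m1 : ∀ a ∈ S, t a ∈ S' := fun a ha => by rw [t1 a ha]; exact hg.mapsTo ha
  have m2 : ∀ a, a ∉ S → hgt E a = i → hgt E (t a) = i ∧ t a ∉ S' := fun a ha h => by
    rw [t2 a ha h]; exact hg'.mapsTo ⟨h, ha⟩
  have hh : ∀ a, hgt E (t a) = hgt E a := by
    intro a
    by_cases ha : a ∈ S
    · exact (hS' (m1 a ha)).trans (hS ha).symm
    · by_cases h : hgt E a = i
      · rw [(m2 a ha h).1, h]
      · rw [t3 a h]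
  have hm : ∀ a, t a ∈ S' ↔ a ∈ S := by
    intro a
    by_cases ha : a ∈ S
    · simp [ha, m1 a ha]
    · simp only [ha, iff_false]
      by_cases h : hgt E a = i
      · exact (m2 a ha h).2
      · intro h'; exact h ((hh a).symm.trans (hS' h'))
  have hinj : Function.Injective t := by
    intro a b hab
    have e1 : hgt E a = hgt E b := by rw [← hh a, ← hh b, hab]
    have e2 : a ∈ S ↔ b ∈ S := by rw [← hm a, ← hm b, hab]
    by_cases ha : a ∈ S
    · rw [t1 a ha, t1 b (e2.1 ha)] at hab
      exact hg.injOn ha (e2.1 ha) hab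
    · have hb : b ∉ S := fun h => ha (e2.2 h)
      by_cases h : hgt E a = i
      · have h' : hgt E b = i := e1 ▸ h
        rw [t2 a ha h, t2 b hb h'] at hab
        exact hg'.injOn ⟨h, ha⟩ ⟨h', hb⟩ hab
      · rwa [t3 a h, t3 b (e1 ▸ h)] at hab
  refine ⟨Equiv.ofBijective t (Finite.injective_iff_bijective.1 hinj), hh, ?_, hm⟩
  intro a
  show lwt E (t a) = _
  by_cases ha : a ∈ S
  · rw [t1 a ha, hgL a ha]
  · by_cases h : hgt E a = i
    · rw [t2 a ha h, hgL' a ⟨h, ha⟩]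
    · rw [t3 a h]

theorem exists_perm {n : ℕ} (E : Fin n → Fin n → Prop) (hh : Hierarchical E) (hU : UDP E)
    (X X' : Set (Fin n)) (hcard : (gclosure E X).ncard = (gclosure E X').ncard) :
    ∃ σ : Equiv.Perm (Fin n), (∀ u v, gdom E (σ u) (σ v) ↔ gdom E u v) ∧
      ∀ v, σ v ∈ gclosure E X' ↔ v ∈ gclosure E X := by
  have hempty : gclosure E (∅ : Set (Fin n)) = ∅ := by simp [gclosure]
  rcases X.eq_empty_or_nonempty with rfl | hX
  · rw [hempty, Set.ncard_empty, eq_comm, Set.ncard_eq_zero (Set.toFinite _)] at hcard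
    exact ⟨Equiv.refl _, by simp, by simp [hempty, hcard]⟩
  rcases X'.eq_empty_or_nonempty with rfl | hX'
  · rw [hempty, Set.ncard_empty, Set.ncard_eq_zero (Set.toFinite _)] at hcard
    exact ⟨Equiv.refl _, by simp, by simp [hempty, hcard]⟩
  obtain ⟨i, S, hne, hS, h1⟩ := closure_shape E hh X hX
  obtain ⟨i', S', hne', hS', h2⟩ := closure_shape E hh X' hX'
  rw [h1, h2] at hcard
  have hi : i = i' := by
    rcases lt_trichotomy i i' with h | h | h
    · have := shape_lt E i i' S S' hS hS' hne' h; omega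
    · exact h
    · have := shape_lt E i' i S' S hS' hS hne h; omega
  subst hi
  rw [shape_ncard E i S hS, shape_ncard E i S' hS'] at hcard
  obtain ⟨τ, th, tl, tm⟩ := exists_perm_classes E hU i S S' hS hS' (by omega)
  obtain ⟨σ, hσ⟩ := exists_equiv_of_fibers (fun v => τ (gpi E v)) (gpi E) (by
    intro b
    have e1 : Nat.card {a // gpi E a = b} = lwt E b := rfl
    have e2 : Nat.card {v // τ (gpi E v) = b} = lwt E (τ.symm b) := by
      simp only [← Equiv.eq_symm_apply]; rfl
    rw [e1, e2, ← tl, Equiv.apply_symm_apply])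
  refine ⟨σ, ?_, ?_⟩
  · intro u v
    rw [gdom_iff E hh, gdom_iff E hh, hσ, hσ, th, th]
    simp
  · intro v
    rw [h1, h2]
    simp only [Set.mem_union, Set.mem_ofPred_eq, hσ, th, tm]

theorem rel_of_weight {n : ℕ} {F : Type*} [Field F] (E : Fin n → Fin n → Prop)
    (hh : Hierarchical E) (hU : UDP E) (c c' : Fin n → F) (h : gweight E c = gweight E c') :
    IsoRel E c c' := by
  classical
  obtain ⟨σ, h1, h2⟩ := exists_perm E hh hU _ _ h
  have a1 := rel_ind E _ c rfl
  have a2 := rel_ind E _ c' rfl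
  have a3 := rel_perm E σ h1 (fun i => if i ∈ gclosure E {i | c' i ≠ 0} then (1 : F) else 0)
  simp only [h2] at a3
  exact (a1.trans a3.symm).trans a2.symm

theorem card_zero {n : ℕ} {F : Type*} [Field F] [Fintype F] (C : Submodule F (Fin n → F))
    (y : Fin n → F) (hy : y ∉ dualCode (C : Set (Fin n → F))) :
    Nat.card {c : C // (c : Fin n → F) ⬝ᵥ y = 0} * Nat.card F = Nat.card C := by
  let φ : C →ₗ[F] F :=
    { toFun := fun c => (c : Fin n → F) ⬝ᵥ y
      map_add' := fun a b => by simp [add_dotProduct]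
      map_smul' := fun t a => by simp [smul_dotProduct] }
  have hφ : φ ≠ 0 := by
    intro h
    apply hy
    intro c hc
    exact congrArg (fun f : C →ₗ[F] F => f ⟨c, hc⟩) h
  have hs : Function.Surjective φ := LinearMap.surjective hφ
  have h1 := Submodule.card_eq_card_quotient_mul_card (LinearMap.ker φ)
  have h2 := Nat.card_congr (LinearMap.quotKerEquivOfSurjective φ hs).toEquiv
  rw [h2] at h1
  rw [h1]
  rfl

open Classical in
theorem double_count {n : ℕ} {F : Type*} [Field F] [Fintype F] (E : Fin n → Fin n → Prop)
    (C : Submodule F (Fin n → F)) (j : ℕ) :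
    Nat.card F * ∑ c : C, (Finset.univ.filter
      (fun y : Fin n → F => gweight (flip E) y = j ∧ (c : Fin n → F) ⬝ᵥ y = 0)).card
     + Nat.card C * Acount (flip E) (dualCode (C : Set (Fin n → F))) j =
    Nat.card F * Nat.card C * Acount (flip E) (dualCode (C : Set (Fin n → F))) j +
      Nat.card C * (Finset.univ.filter
      (fun y : Fin n → F => gweight (flip E) y = j)).card := by
  have hA : Acount (flip E) (dualCode (C : Set (Fin n → F))) j =
      ((Finset.univ.filter (fun y : Fin n → F => gweight (flip E) y = j)).filter
        (fun y => y ∈ dualCode (C : Set (Fin n → F)))).card := by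
    unfold Acount
    rw [← Set.ncard_coe_finset]
    congr 1
    ext y; simp [and_comm]
  have hsum : ∑ c : C, (Finset.univ.filter
      (fun y : Fin n → F => gweight (flip E) y = j ∧ (c : Fin n → F) ⬝ᵥ y = 0)).card =
      ∑ y ∈ Finset.univ.filter (fun y : Fin n → F => gweight (flip E) y = j),
        Nat.card {c : C // (c : Fin n → F) ⬝ᵥ y = 0} := by
    simp only [Finset.card_filter, Nat.card_eq_fintype_card, Fintype.card_subtype,
      Finset.sum_filter]
    rw [Finset.sum_comm]
    refine Finset.sum_congr rfl fun y _ => ?_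
    by_cases h : gweight (flip E) y = j <;> simp [h]
  rw [hsum, hA]
  set T := Finset.univ.filter (fun y : Fin n → F => gweight (flip E) y = j) with hT
  rw [← Finset.sum_filter_add_sum_filter_not T (fun y => y ∈ dualCode (C : Set (Fin n → F))),
    ← Finset.card_filter_add_card_filter_not (s := T) (fun y => y ∈ dualCode (C : Set (Fin n → F)))]
  rw [mul_add, Finset.mul_sum, Finset.mul_sum]
  have e1 : ∀ y ∈ T.filter (fun y => y ∈ dualCode (C : Set (Fin n → F))),
      Nat.card F * Nat.card {c : C // (c : Fin n → F) ⬝ᵥ y = 0} = Nat.card F * Nat.card C := by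
    intro y hy
    congr 1
    refine Nat.card_congr (Equiv.subtypeUnivEquiv ?_)
    intro c
    exact (Finset.mem_filter.1 hy).2 c c.2
  have e2 : ∀ y ∈ T.filter (fun y => y ∉ dualCode (C : Set (Fin n → F))),
      Nat.card F * Nat.card {c : C // (c : Fin n → F) ⬝ᵥ y = 0} = Nat.card C := by
    intro y hy
    rw [mul_comm]
    exact card_zero C y (Finset.mem_filter.1 hy).2
  rw [Finset.sum_congr rfl e1, Finset.sum_congr rfl e2]
  simp only [Finset.sum_const, smul_eq_mul]
  ring

theorem macwilliams_of_udp {n : ℕ} {F : Type*} [Field F] [Fintype F]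
    (E : Fin n → Fin n → Prop) (hh : Hierarchical E) (hU : UDP E)
    (C₁ C₂ : Submodule F (Fin n → F))
    (h : ∀ i : ℕ, Acount E (C₁ : Set (Fin n → F)) i = Acount E (C₂ : Set (Fin n → F)) i) (j : ℕ) :
    Acount (flip E) (dualCode (C₁ : Set (Fin n → F))) j =
        Acount (flip E) (dualCode (C₂ : Set (Fin n → F))) j := by
  classical
  have key : ∀ (C : Submodule F (Fin n → F)) (i : ℕ),
      Nat.card {c : C // gweight E (c : Fin n → F) = i} = Acount E (C : Set (Fin n → F)) i := by
    intro C i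
    exact Nat.card_congr (Equiv.subtypeSubtypeEquivSubtypeInter (fun c => c ∈ C)
      (fun c => gweight E c = i))
  obtain ⟨e, he⟩ := exists_equiv_of_fibers (fun c : C₁ => gweight E (c : Fin n → F))
    (fun c : C₂ => gweight E (c : Fin n → F)) (fun i => by rw [key, key, h])
  have d1 := double_count E C₁ j
  have d2 := double_count E C₂ j
  have hs : ∑ c : C₁, (Finset.univ.filter
      (fun y : Fin n → F => gweight (flip E) y = j ∧ (c : Fin n → F) ⬝ᵥ y = 0)).card =
      ∑ c : C₂, (Finset.univ.filter
      (fun y : Fin n → F => gweight (flip E) y = j ∧ (c : Fin n → F) ⬝ᵥ y = 0)).card := by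
    rw [← Equiv.sum_comp e]
    refine Finset.sum_congr rfl fun c _ => ?_
    obtain ⟨Φ, p1, p2⟩ := rel_of_weight E hh hU _ _ (he c)
    refine Finset.card_equiv Φ ?_
    intro y
    simp [p1, p2]
  rw [hs, Nat.card_congr e] at d1
  have hC : 0 < Nat.card C₂ := Nat.card_pos
  have hF : 1 < Nat.card F := by
    rw [Nat.card_eq_fintype_card]; exact Fintype.one_lt_card
  set B₁ := Acount (flip E) (dualCode (C₁ : Set (Fin n → F))) j
  set B₂ := Acount (flip E) (dualCode (C₂ : Set (Fin n → F))) j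
  obtain ⟨r, hr⟩ : ∃ r, Nat.card F = r + 2 := ⟨Nat.card F - 2, by omega⟩
  rw [hr] at d1 d2
  have : (r + 1) * Nat.card C₂ * B₁ = (r + 1) * Nat.card C₂ * B₂ := by nlinarith
  exact Nat.eq_of_mul_eq_mul_left (by positivity) this

/-! ### The converse direction -/

open Classical in
/-- The word with one coordinate `1` in every class of `S`. -/
noncomputable def repWord {n : ℕ} (F : Type*) [Field F] (E : Fin n → Fin n → Prop)
    (S : Set (Vred E)) : Fin n → F :=
  fun v => if gpi E v ∈ S ∧ v = (gpi_surj E (gpi E v)).choose then 1 else 0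

theorem repWord_weight {n : ℕ} {F : Type*} [Field F] (E : Fin n → Fin n → Prop)
    (hh : Hierarchical E) (i : ℕ) (S : Set (Vred E)) (hS : S ⊆ {a | hgt E a = i})
    (hne : S.Nonempty) :
    gweight E (repWord F E S) = {v | hgt E (gpi E v) < i}.ncard + ∑ᶠ a ∈ S, lwt E a := by
  rw [← shape_ncard E i S hS]
  unfold gweight
  congr 1
  have hex : ∀ a ∈ S, ∃ v, gpi E v = a ∧ repWord F E S v ≠ 0 := by
    intro a ha
    have hp := (gpi_surj E a).choose_spec
    refine ⟨(gpi_surj E a).choose, hp, ?_⟩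
    simp [repWord, hp, ha]
  have hin : ∀ v, repWord F E S v ≠ 0 → gpi E v ∈ S := by
    intro v hv
    by_contra h
    exact hv (by simp [repWord, h])
  ext v
  constructor
  · rintro ⟨u, hu, huv⟩
    have h1 := hin u hu
    have h3 : hgt E (gpi E u) = i := hS h1
    rcases (gdom_iff E hh u v).1 huv with h2 | h2
    · left; rw [h3] at h2; exact h2
    · right; rw [h2] at h1; exact h1
  · rintro (h | h)
    · obtain ⟨a, ha⟩ := hne
      obtain ⟨u, rfl, hu⟩ := hex a ha
      have h3 : hgt E (gpi E u) = i := hS ha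
      refine ⟨u, hu, (gdom_iff E hh u v).2 (Or.inl ?_)⟩
      rw [h3]; exact h
    · obtain ⟨u, h2, hu⟩ := hex _ h
      exact ⟨u, hu, (gdom_iff E hh u v).2 (Or.inr h2)⟩

theorem gweight_smul {n : ℕ} {F : Type*} [Field F] (E : Fin n → Fin n → Prop)
    (t : F) (ht : t ≠ 0) (x : Fin n → F) : gweight E (t • x) = gweight E x := by
  simp [gweight, ht]

theorem Acount_span {n : ℕ} {F : Type*} [Field F] [Fintype F] (E : Fin n → Fin n → Prop)
    (x x' : Fin n → F) (hx : x ≠ 0) (hx' : x' ≠ 0) (h : gweight E x = gweight E x') (i : ℕ) :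
    Acount E (Submodule.span F {x} : Set (Fin n → F)) i =
      Acount E (Submodule.span F {x'} : Set (Fin n → F)) i := by
  have key : ∀ z : Fin n → F, z ≠ 0 → Acount E (Submodule.span F {z} : Set (Fin n → F)) i =
      {t : F | gweight E (t • z) = i}.ncard := by
    intro z hz
    rw [← Set.ncard_image_of_injective _ (smul_left_injective F hz)]
    unfold Acount
    congr 1
    ext c
    simp only [SetLike.mem_coe, Submodule.mem_span_singleton, Set.mem_ofPred_eq, Set.mem_image]
    constructor
    · rintro ⟨⟨t, rfl⟩, h⟩; exact ⟨t, h, rfl⟩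
    · rintro ⟨t, h, rfl⟩; exact ⟨⟨t, rfl⟩, h⟩
  rw [key x hx, key x' hx']
  congr 1
  ext t
  by_cases ht : t = 0
  · simp [ht]
  · simp [gweight_smul E t ht, h]

/-- The number of vertices above level `i`. -/
theorem flip_closure {n : ℕ} (E : Fin n → Fin n → Prop) (hh : Hierarchical E) (v : Fin n) :
    (gclosure (flip E) {v}).ncard =
      lwt E (gpi E v) + {u | hgt E (gpi E v) < hgt E (gpi E u)}.ncard := by
  have : gclosure (flip E) {v} = {u | gpi E u = gpi E v} ∪
      {u | hgt E (gpi E v) < hgt E (gpi E u)} := by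
    ext u
    simp only [gclosure, Set.mem_singleton_iff, exists_eq_left, Set.mem_ofPred_eq, gdom_flip,
      gdom_iff E hh, Set.mem_union]
    tauto
  rw [this, Set.ncard_union_eq _ (Set.toFinite _) (Set.toFinite _)]
  · rfl
  · rw [Set.disjoint_left]
    intro u h1 h2
    have h1 : gpi E u = gpi E v := h1
    have h2 : hgt E (gpi E v) < hgt E (gpi E u) := h2
    rw [h1] at h2
    omega

/-- The MacWilliams identity for `E` over `F`. -/
def MacW {n : ℕ} (F : Type*) [Field F] (E : Fin n → Fin n → Prop) : Prop :=
  ∀ C₁ C₂ : Submodule F (Fin n → F),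
      (∀ i : ℕ, Acount E (C₁ : Set (Fin n → F)) i = Acount E (C₂ : Set (Fin n → F)) i) →
      (∀ i : ℕ, Acount (flip E) (dualCode (C₁ : Set (Fin n → F))) i =
        Acount (flip E) (dualCode (C₂ : Set (Fin n → F))) i)

theorem no_min {n : ℕ} {F : Type*} [Field F] [Fintype F] (E : Fin n → Fin n → Prop)
    (hh : Hierarchical E) (hM : MacW F E) (i : ℕ)
    (S S' : Set (Vred E)) (hS : S ⊆ {a | hgt E a = i}) (hS' : S' ⊆ {a | hgt E a = i})
    (hsum : (∑ᶠ a ∈ S, lwt E a) = ∑ᶠ a ∈ S', lwt E a) (hne' : S'.Nonempty)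
    (a : Vred E) (ha : a ∈ S) (hlt : ∀ b ∈ S', lwt E a < lwt E b) : False := by
  classical
  have hne : S.Nonempty := ⟨a, ha⟩
  have nz : ∀ T : Set (Vred E), T.Nonempty → repWord F E T ≠ 0 := by
    rintro T ⟨b, hb⟩ h0
    have hp := (gpi_surj E b).choose_spec
    have := congrFun h0 (gpi_surj E b).choose
    simp [repWord, hp, hb] at this
  have hw : gweight E (repWord F E S) = gweight E (repWord F E S') := by
    rw [repWord_weight E hh i S hS hne, repWord_weight E hh i S' hS' hne', hsum]
  set v := (gpi_surj E a).choose with hv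
  have hva : gpi E v = a := (gpi_surj E a).choose_spec
  have hvi : hgt E (gpi E v) = i := by rw [hva]; exact hS ha
  have hr : repWord F E S v = 1 := by simp [repWord, hva, ha, ← hv]
  set j := (gclosure (flip E) {v}).ncard with hj
  have hM' := hM _ _ (Acount_span E _ _ (nz S hne) (nz S' hne') hw) j
  have hdual : ∀ x : Fin n → F, ∀ y, y ∈ dualCode (Submodule.span F {x} : Set (Fin n → F)) ↔
      x ⬝ᵥ y = 0 := by
    intro x y
    constructor
    · intro h; exact h x (Submodule.mem_span_singleton_self x)
    · intro h c hc
      obtain ⟨t, rfl⟩ := Submodule.mem_span_singleton.1 hc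
      show (t • x) ⬝ᵥ y = 0
      rw [smul_dotProduct, h, smul_zero]
  refine absurd hM' (ne_of_lt ?_)
  unfold Acount
  apply Set.ncard_lt_ncard _ (Set.toFinite _)
  rw [Set.ssubset_iff_of_subset]
  · refine ⟨Pi.single v 1, ?_, ?_⟩
    · constructor
      · rw [hdual, dotProduct_single, mul_one]
        have : a ∉ S' := fun h => lt_irrefl _ (hlt a h)
        simp [repWord, hva, this]
      · show (gclosure _ _).ncard = _
        rw [hj]
        congr 2
        ext u
        simp [Pi.single_apply]
    · rintro ⟨h1, -⟩
      rw [hdual, dotProduct_single, mul_one, hr] at h1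
      exact one_ne_zero h1
  · rintro y ⟨-, hy⟩
    refine ⟨?_, hy⟩
    rw [hdual]
    refine Finset.sum_eq_zero fun u _ => ?_
    by_contra hne0
    have h1 : repWord F E S' u ≠ 0 := left_ne_zero_of_mul hne0
    have h2 : y u ≠ 0 := right_ne_zero_of_mul hne0
    have h3 : gpi E u ∈ S' := by
      by_contra h
      exact h1 (by simp [repWord, h])
    have h4 : (gclosure (flip E) {u}).ncard ≤ gweight (flip E) y := by
      apply Set.ncard_le_ncard _ (Set.toFinite _)
      apply gclosure_sub
      rintro _ rfl
      exact subset_gclosure _ _ h2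
    have h5 : hgt E (gpi E u) = i := hS' h3
    have h6 := hlt _ h3
    rw [hy, hj, flip_closure E hh, flip_closure E hh, h5, hvi, hva] at h4
    omega

theorem udp_of_macw {n : ℕ} {F : Type*} [Field F] [Fintype F] (E : Fin n → Fin n → Prop)
    (hh : Hierarchical E) (hM : MacW F E) (i N : ℕ) :
    ∀ S S' : Set (Vred E), S.ncard = N → S ⊆ {a | hgt E a = i} → S' ⊆ {a | hgt E a = i} →
    (∑ᶠ a ∈ S, lwt E a) = (∑ᶠ a ∈ S', lwt E a) →
    ∃ g : Vred E → Vred E, Set.BijOn g S S' ∧ ∀ a ∈ S, lwt E (g a) = lwt E a := by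
  classical
  have hz : ∀ T : Set (Vred E), (∑ᶠ a ∈ T, lwt E a) = 0 → T = ∅ := by
    intro T hT
    by_contra h
    obtain ⟨a, ha⟩ := Set.nonempty_iff_ne_empty.2 h
    rw [← finsum_mem_add_sdiff (f := lwt E) (Set.singleton_subset_iff.2 ha) (Set.toFinite _),
      finsum_mem_singleton] at hT
    have := lwt_pos E a
    omega
  induction N with
  | zero =>
    intro S S' hN hS hS' hsum
    rw [Set.ncard_eq_zero (Set.toFinite _)] at hN
    subst hN
    have : S' = ∅ := hz _ (by rw [← hsum]; simp)
    subst this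
    exact ⟨id, by simp, by simp⟩
  | succ N ih =>
    intro S S' hN hS hS' hsum
    have hne : S.Nonempty := by rw [← Set.ncard_pos (Set.toFinite _)]; omega
    have hne' : S'.Nonempty := by
      rw [Set.nonempty_iff_ne_empty]
      rintro rfl
      rw [hz S (by rw [hsum]; simp)] at hne
      exact Set.not_nonempty_empty hne
    by_cases hcom : ∃ a ∈ S, ∃ b ∈ S', lwt E a = lwt E b
    · obtain ⟨a, ha, b, hb, hab⟩ := hcom
      have h1 := finsum_mem_add_sdiff (f := lwt E) (Set.singleton_subset_iff.2 ha) (Set.toFinite _)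
      have h2 := finsum_mem_add_sdiff (f := lwt E) (Set.singleton_subset_iff.2 hb) (Set.toFinite _)
      rw [finsum_mem_singleton] at h1 h2
      have h3 := Set.ncard_sdiff_singleton_add_one ha (Set.toFinite _)
      obtain ⟨g, hg, hgL⟩ := ih (S \ {a}) (S' \ {b}) (by omega) (Set.sdiff_subset.trans hS)
        (Set.sdiff_subset.trans hS') (by omega)
      refine ⟨Function.update g a b, ⟨?_, ?_, ?_⟩, ?_⟩
      · intro x hx
        by_cases hxa : x = a
        · subst hxa; simpa using hb
        · rw [Function.update_of_ne hxa]
          exact (hg.mapsTo ⟨hx, hxa⟩).1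
      · intro x hx y hy hxy
        by_cases hxa : x = a <;> by_cases hya : y = a
        · rw [hxa, hya]
        · subst hxa
          rw [Function.update_self, Function.update_of_ne hya] at hxy
          exact absurd hxy.symm (hg.mapsTo ⟨hy, hya⟩).2
        · subst hya
          rw [Function.update_self, Function.update_of_ne hxa] at hxy
          exact absurd hxy (hg.mapsTo ⟨hx, hxa⟩).2
        · rw [Function.update_of_ne hxa, Function.update_of_ne hya] at hxy
          exact hg.injOn ⟨hx, hxa⟩ ⟨hy, hya⟩ hxy
      · intro z hzS
        by_cases hzb : z = b
        · exact ⟨a, ha, by rw [Function.update_self, hzb]⟩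
        · obtain ⟨x, hx, rfl⟩ := hg.surjOn ⟨hzS, hzb⟩
          exact ⟨x, hx.1, Function.update_of_ne hx.2 _ _⟩
      · intro x hx
        by_cases hxa : x = a
        · subst hxa; rw [Function.update_self, hab]
        · rw [Function.update_of_ne hxa]
          exact hgL x ⟨hx, hxa⟩
    · exfalso
      push Not at hcom
      obtain ⟨a, ha, hmin⟩ := Set.exists_min_image S (lwt E) (Set.toFinite _) hne
      obtain ⟨b, hb, hmin'⟩ := Set.exists_min_image S' (lwt E) (Set.toFinite _) hne'
      rcases lt_trichotomy (lwt E a) (lwt E b) with h | h | h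
      · exact no_min E hh hM i S S' hS hS' hsum hne' a ha fun x hx => lt_of_lt_of_le h (hmin' x hx)
      · exact hcom a ha b hb h
      · exact no_min E hh hM i S' S hS' hS hsum.symm hne b hb
          fun x hx => lt_of_lt_of_le h (hmin x hx)

/-- for a graph `G` whose reduced canonical form determines a hierarchical
poset, `G` admits the MacWilliams Identity — for all linear codes `C₁, C₂`, if the
`G`-weight enumerators of `C₁` and `C₂` coincide then the `Ḡ`-weight enumerators of the
dual codes coincide (`Ḡ` being the reverse graph `flip E`) — iff `G` satisfies the Unique
Decomposition Property. -/
theorem stmt_19 {n : ℕ} (hn : 1 ≤ n) {F : Type*} [Field F] [Fintype F]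
    (E : Fin n → Fin n → Prop) (hE : Irreflexive E) (hh : Hierarchical E) :
    (∀ C₁ C₂ : Submodule F (Fin n → F),
      (∀ i : ℕ, Acount E (C₁ : Set (Fin n → F)) i = Acount E (C₂ : Set (Fin n → F)) i) →
      (∀ i : ℕ, Acount (flip E) (dualCode (C₁ : Set (Fin n → F))) i =
        Acount (flip E) (dualCode (C₂ : Set (Fin n → F))) i)) ↔ UDP E := by
  constructor
  · intro hM i S S' hS hS' hsum
    exact udp_of_macw (F := F) E hh hM i S.ncard S S' rfl hS hS' hsum
  · intro hU C₁ C₂ h j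
    exact macwilliams_of_udp E hh hU C₁ C₂ h j
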